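/- arXiv:1307.4682 — 2 statements merged into one kernel-verified Lean document; each statement's English description precedes it below -/
import Mathlib

section
/- Given V-functors j: X' → X, f: X' → A and u: A → X between V-categories over a commutative quantale V, the equality X(j x', u a) = ⋁_w X'(x', w) ⊗ A(f w, a) holds for all objects x' of X' and a of A if and only if f is left adjoint to u relative to j, i.e. X(j x', u a) = A(f x', a) for all objects x' of X' and a of A. -/
universe u v w

/-- A category enriched in a commutative quantale `V`:
objects together with `V`-valued homs satisfying the identity and composition axioms. -/
structure VCategory (V : Type u) [CompleteLattice V] [CommMonoid V] where
  Obj : Type v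
  hom : Obj → Obj → V
  one_le_hom : ∀ a, (1 : V) ≤ hom a a
  comp_le : ∀ a b c, hom b c * hom a b ≤ hom a c

/-- A `V`-functor is an object assignment which is (hom-)expanding. -/
def IsVFunctor {V : Type u} [CompleteLattice V] [CommMonoid V]
    (A : VCategory.{u, v} V) (B : VCategory.{u, w} V) (f : A.Obj → B.Obj) : Prop :=
  ∀ a a', A.hom a a' ≤ B.hom (f a) (f a')

/-- A module `R : A ⇸ B`. -/
def IsModule {V : Type u} [CompleteLattice V] [CommMonoid V]
    (A : VCategory.{u, v} V) (B : VCategory.{u, w} V) (R : B.Obj → A.Obj → V) : Prop :=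
  ∀ (a a' : A.Obj) (b b' : B.Obj), B.hom b' b * R b a * A.hom a a' ≤ R b' a'

/-- The internal hom of the quantale: `[x,y] = ⋁ {z | x ⊗ z ≤ y}`. -/
def ihom {V : Type u} [CompleteLattice V] [CommMonoid V] (x y : V) : V :=
  sSup {z | x * z ≤ y}

/-- A presheaf on `A`. -/
def IsPresheaf {V : Type u} [CompleteLattice V] [CommMonoid V]
    (A : VCategory.{u, v} V) (F : A.Obj → V) : Prop :=
  ∀ a a', F a * A.hom a' a ≤ F a'

/-! For each `a` the presheaf `A(f -, a)` on `X'` is the restriction along `f` of a representable.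
The co-Yoneda lemma `⨆ w, X'(x', w) ⊗ F w = F x'`, applied to it, collapses the join in the
exactness condition to `A(f x', a)`, which is the right-hand side of the relative adjunction. -/

universe t

section Presheaf

variable {V : Type u} [CompleteLattice V] [CommMonoid V]

theorem VCategory.isPresheaf_hom (A : VCategory.{u, v} V) (a : A.Obj) :
    IsPresheaf A (A.hom · a) :=
  fun b b' ↦ A.comp_le b' b a

variable [MulLeftMono V]

theorem IsPresheaf.comp_isVFunctor {A : VCategory.{u, v} V} {B : VCategory.{u, w} V}
    {F : B.Obj → V} {f : A.Obj → B.Obj} (hF : IsPresheaf B F) (hf : IsVFunctor A B f) :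
    IsPresheaf A (F ∘ f) := fun a a' ↦
  calc F (f a) * A.hom a' a
    _ ≤ F (f a) * B.hom (f a') (f a) := by gcongr; exact hf a' a
    _ ≤ F (f a') := hF (f a) (f a')

theorem IsPresheaf.iSup_hom_mul_eq {A : VCategory.{u, v} V} {F : A.Obj → V}
    (hF : IsPresheaf A F) (a : A.Obj) : ⨆ b, A.hom a b * F b = F a := by
  apply le_antisymm
  · refine iSup_le fun b ↦ ?_
    rw [mul_comm]
    exact hF b a
  · calc F a
      _ ≤ A.hom a a * F a := le_mul_of_one_le_left' (A.one_le_hom a)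
      _ ≤ ⨆ b, A.hom a b * F b := le_iSup (fun b ↦ A.hom a b * F b) a

theorem IsVFunctor.iSup_hom_mul_hom_eq {A : VCategory.{u, v} V} {B : VCategory.{u, w} V}
    {f : A.Obj → B.Obj} (hf : IsVFunctor A B f) (a : A.Obj) (b : B.Obj) :
    ⨆ c, A.hom a c * B.hom (f c) b = B.hom (f a) b :=
  ((B.isPresheaf_hom b).comp_isVFunctor hf).iSup_hom_mul_eq a

end Presheaf

theorem square_exact_iff_relative_adjunction_general
    {V : Type u} [CompleteLattice V] [CommMonoid V] [MulLeftMono V]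
    (X' : VCategory.{u, v} V) (X : VCategory.{u, w} V) (A : VCategory.{u, t} V)
    (j : X'.Obj → X.Obj) (f : X'.Obj → A.Obj) (u : A.Obj → X.Obj) (hf : IsVFunctor X' A f) :
    (∀ (x' : X'.Obj) (a : A.Obj),
        X.hom (j x') (u a) = ⨆ w, X'.hom x' w * A.hom (f w) a) ↔
      (∀ (x' : X'.Obj) (a : A.Obj), X.hom (j x') (u a) = A.hom (f x') a) := by
  simp only [hf.iSup_hom_mul_hom_eq]

theorem isQuantale_of_mul_sSup {V : Type u} [CompleteLattice V] [CommMonoid V]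
    (hV : ∀ (x : V) (s : Set V), x * sSup s = ⨆ y ∈ s, x * y) : IsQuantale V where
  mul_sSup_distrib := hV
  sSup_mul_distrib s y := by simpa only [mul_comm] using hV y s

/-- The square is exact iff `f` is left adjoint to `u` relative to `j`. -/
theorem square_exact_iff_relative_adjunction {V : Type u} [CompleteLattice V] [CommMonoid V]
    (hV : ∀ (x : V) (s : Set V), x * sSup s = ⨆ y ∈ s, x * y)
    (X' X A : VCategory.{u, v} V)
    (j : X'.Obj → X.Obj) (f : X'.Obj → A.Obj) (u : A.Obj → X.Obj)
    (hj : IsVFunctor X' X j) (hf : IsVFunctor X' A f) (hu : IsVFunctor A X u) :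
    (∀ (x' : X'.Obj) (a : A.Obj),
        X.hom (j x') (u a) = ⨆ w, X'.hom x' w * A.hom (f w) a) ↔
      (∀ (x' : X'.Obj) (a : A.Obj), X.hom (j x') (u a) = A.hom (f x') a) := by
  have := isQuantale_of_mul_sSup hV
  exact square_exact_iff_relative_adjunction_general X' X A j f u hf
end

section
/- The relation lifting of the generalised power construction P is given by the following formula: assume the tensor of the commutative quantale V coincides with binary meet ∧. For a module R: A ⇸ B between V-categories with collage Coll R and inclusions i0: B → Coll R, i1: A → Coll R, and for all V-subsets F of A and G of B, the hom in the generalised power V-category P(Coll R) satisfies P(Coll R)(P i0 G, P i1 F) = ⋀_b [ G b, ⋁_a F a ∧ R(b,a) ] ∧ ⋀_a [ F a, ⋁_b G b ∧ R(b,a) ]. -/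
universe u v w

/-- The Egli-Milner `V`-valued hom on `V`-subsets, given a hom function. -/
def PHomF {V : Type u} [CompleteLattice V] [CommMonoid V] {α : Type v}
    (hom : α → α → V) (φ ψ : α → V) : V :=
  (⨅ x, ihom (φ x) (⨆ x', ψ x' * hom x x')) *
    (⨅ x', ihom (ψ x') (⨆ x, φ x * hom x x'))

/-- Direct image of a `V`-subset along a map. -/
def Pmap {V : Type u} [CompleteLattice V] [CommMonoid V] {α : Type v} {β : Type w}
    (f : α → β) (φ : α → V) : β → V :=
  fun b => ⨆ a, ⨆ _ : f a = b, φ a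

/-- The hom function of the collage of a module `R : A ⇸ B`: objects are the disjoint
union of the objects of `B` (left) and of `A` (right). -/
def collHom {V : Type u} [CompleteLattice V] [CommMonoid V]
    (A B : VCategory.{u, v} V) (R : B.Obj → A.Obj → V) :
    B.Obj ⊕ A.Obj → B.Obj ⊕ A.Obj → V
  | Sum.inl b, Sum.inl b' => B.hom b b'
  | Sum.inl b, Sum.inr a => R b a
  | Sum.inr _, Sum.inl _ => ⊥
  | Sum.inr a, Sum.inr a' => A.hom a a'

/-!
Direct image along `f` is left adjoint to restriction along `f`, and tensoring is left adjoint to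
`ihom`. Hence a meet of homs out of a direct image, or a join of tensors with one, can be computed
before taking the image. So the hom between two direct images `Pmap i φ` and `Pmap j ψ` sees only
the values `hom (i b) (j a)`; for the inclusions into a collage these are the values of the module.
-/

section Quantale

variable {V : Type u} [CompleteLattice V] [CommMonoid V]

theorem isQuantale_of_mul_sSup_distrib
    (hV : ∀ (x : V) (s : Set V), x * sSup s = ⨆ y ∈ s, x * y) :
    IsQuantale V where
  mul_sSup_distrib := hV
  sSup_mul_distrib s y := by simp only [mul_comm _ y, hV]

theorem le_ihom_iff [IsQuantale V] {x y z : V} : z ≤ ihom x y ↔ x * z ≤ y :=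
  Quantale.rightMulResiduation_le_iff_mul_le

theorem le_ihom_comm [IsQuantale V] {x y z : V} : z ≤ ihom x y ↔ x ≤ ihom z y := by
  rw [le_ihom_iff, le_ihom_iff, mul_comm]

end Quantale

section DirectImage

variable {V : Type u} [CompleteLattice V] [CommMonoid V] {α : Type v} {β : Type w}

theorem pmap_le_iff_le_comp {f : α → β} {φ : α → V} {ψ : β → V} :
    Pmap f φ ≤ ψ ↔ φ ≤ ψ ∘ f := by
  simp only [Pi.le_def, Pmap, iSup_le_iff, Function.comp_apply, forall_comm (α := β), forall_eq']

variable [IsQuantale V]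

theorem iSup_pmap_mul (f : α → β) (φ : α → V) (k : β → V) :
    ⨆ b, Pmap f φ b * k b = ⨆ a, φ a * k (f a) := by
  refine eq_of_forall_ge_iff fun z => ?_
  simp only [iSup_le_iff, mul_comm _ (k _), ← le_ihom_iff]
  exact pmap_le_iff_le_comp (ψ := fun b => ihom (k b) z)

theorem iInf_ihom_pmap (f : α → β) (φ : α → V) (k : β → V) :
    ⨅ b, ihom (Pmap f φ b) (k b) = ⨅ a, ihom (φ a) (k (f a)) := by
  refine eq_of_forall_le_iff fun z => ?_
  simp only [le_iInf_iff, le_ihom_comm (z := z)]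
  exact pmap_le_iff_le_comp (ψ := fun b => ihom z (k b))

end DirectImage

theorem power_relation_lifting_general {V : Type u} [CompleteLattice V] [CommMonoid V]
    [IsQuantale V] {α β γ : Type*} (hom : γ → γ → V) (i : β → γ) (j : α → γ)
    (G : β → V) (F : α → V) :
    PHomF hom (Pmap i G) (Pmap j F) =
      (⨅ b, ihom (G b) (⨆ a, F a * hom (i b) (j a))) *
        ⨅ a, ihom (F a) (⨆ b, G b * hom (i b) (j a)) := by
  simp only [PHomF, iSup_pmap_mul, iInf_ihom_pmap]

/-- The relation lifting of the generalised power construction computed on a module via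
its collage, when the tensor of `V` is binary meet. -/
theorem power_relation_lifting {V : Type u} [CompleteLattice V] [CommMonoid V]
    (hV : ∀ (x : V) (s : Set V), x * sSup s = ⨆ y ∈ s, x * y)
    (hmeet : ∀ x y : V, x * y = x ⊓ y)
    (A B : VCategory.{u, v} V)
    (R : B.Obj → A.Obj → V) (hR : IsModule A B R)
    (F : A.Obj → V) (G : B.Obj → V) :
    PHomF (collHom A B R) (Pmap Sum.inl G) (Pmap Sum.inr F) =
      (⨅ b, ihom (G b) (⨆ a, F a ⊓ R b a)) ⊓ ⨅ a, ihom (F a) (⨆ b, G b ⊓ R b a) := by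
  have := isQuantale_of_mul_sSup_distrib hV
  simpa only [hmeet, collHom] using
    power_relation_lifting_general (collHom A B R) Sum.inl Sum.inr G F
end
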